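/- Define R(v,t) for v ∈ V and t ∈ ℕ by: R(b,t) = 0 and R(r,t) = 1 for all t; R(v,0) = 1 for v ∉ {b,r}; and R(v,t) = (R⁺(v,t−1) + R⁻(v,t−1))/2 for v ∉ {b,r} and t > 0, where R⁺(v,t−1) = max_{w ∈ S(v)} R(w,t−1) and R⁻(v,t−1) = min_{u ∈ S(v)} R(u,t−1). Then for every vertex v and every t ≥ 0, R(v,t+1) ≤ R(v,t). -/

import Mathlib

open Relation Filter

variable {V : Type*}

/-- `fplus E f v` is `f⁺(v) = sup_{w ∈ S(v)} f(w)`, where `S(v)` is the set of successors of `v`. -/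
noncomputable def fplus (E : V → V → Prop) (f : V → ℝ) (v : V) : ℝ :=
  sSup (f '' {w | E v w})

/-- `fminus E f v` is `f⁻(v) = inf_{u ∈ S(v)} f(u)`. -/
noncomputable def fminus (E : V → V → Prop) (f : V → ℝ) (v : V) : ℝ :=
  sInf (f '' {w | E v w})

/-- A Richman cost function: `R : V → [0,1]`, `R(b) = 0`, `R(r) = 1`, and
`R(v) = (R⁺(v) + R⁻(v))/2` for every `v ∉ {b, r}`. -/
def IsRichman (E : V → V → Prop) (b r : V) (R : V → ℝ) : Prop :=
  (∀ v, R v ∈ Set.Icc (0 : ℝ) 1) ∧ R b = 0 ∧ R r = 1 ∧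
    ∀ v, v ≠ b → v ≠ r → R v = (fplus E R v + fminus E R v) / 2

/-- The auxiliary function `R(v,t)`: `R(b,t) = 0`, `R(r,t) = 1`, `R(v,0) = 1` for `v ∉ {b,r}`,
and `R(v,t) = (R⁺(v,t-1) + R⁻(v,t-1))/2` for `v ∉ {b,r}`, `t > 0`. -/
noncomputable def Rseq [DecidableEq V] (E : V → V → Prop) (b r : V) : ℕ → V → ℝ
  | 0 => fun v => if v = b then 0 else 1
  | t + 1 => fun v =>
      if v = b then 0
      else if v = r then 1
      else (fplus E (Rseq E b r t) v + fminus E (Rseq E b r t) v) / 2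

theorem fplus_mono_aux [Fintype V] (E : V → V → Prop) (f g : V → ℝ) (h : ∀ v, f v ≤ g v) (v : V) :
    fplus E f v ≤ fplus E g v := by
  unfold fplus
  rcases Set.eq_empty_or_nonempty {w | E v w} with he | hne
  · simp [he]
  · apply csSup_le (hne.image f)
    rintro _ ⟨w, hw, rfl⟩
    exact (h w).trans (le_csSup (Set.toFinite _).bddAbove ⟨w, hw, rfl⟩)

theorem fminus_mono_aux [Fintype V] (E : V → V → Prop) (f g : V → ℝ) (h : ∀ v, f v ≤ g v) (v : V) :
    fminus E f v ≤ fminus E g v := by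
  unfold fminus
  rcases Set.eq_empty_or_nonempty {w | E v w} with he | hne
  · simp [he]
  · apply le_csInf (hne.image g)
    rintro _ ⟨w, hw, rfl⟩
    exact (csInf_le (Set.toFinite _).bddBelow (Set.mem_image_of_mem f hw)).trans (h w)

theorem fplus_one_aux (E : V → V → Prop) (v : V) : fplus E (fun _ => 1) v ≤ 1 := by
  unfold fplus
  rcases Set.eq_empty_or_nonempty {w | E v w} with he | hne
  · simp [he]
  · simp [hne.image_const]

theorem fminus_one_aux (E : V → V → Prop) (v : V) : fminus E (fun _ => 1) v ≤ 1 := by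
  unfold fminus
  rcases Set.eq_empty_or_nonempty {w | E v w} with he | hne
  · simp [he]
  · simp [hne.image_const]

theorem Rseq_succ_aux [DecidableEq V] (E : V → V → Prop) (b r : V) (t : ℕ) (v : V) :
    Rseq E b r (t + 1) v = if v = b then 0 else if v = r then 1
      else (fplus E (Rseq E b r t) v + fminus E (Rseq E b r t) v) / 2 := rfl

/-- The auxiliary function `R(v,t)` is weakly decreasing in `t`. -/
theorem Rseq_antitone [Fintype V] [DecidableEq V] (E : V → V → Prop) (b r : V)
    (hbr : b ≠ r)
    (hreach : ∀ v, ReflTransGen E v b ∨ ReflTransGen E v r) :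
    ∀ (v : V) (t : ℕ), Rseq E b r (t + 1) v ≤ Rseq E b r t v := by
  intro v t
  induction t generalizing v with
  | zero =>
    have h0 : ∀ w, Rseq E b r 0 w ≤ (fun _ : V => (1 : ℝ)) w := by
      intro w
      simp only [Rseq]
      split_ifs <;> norm_num
    have h1 := (fplus_mono_aux E _ _ h0 v).trans (fplus_one_aux E v)
    have h2 := (fminus_mono_aux E _ _ h0 v).trans (fminus_one_aux E v)
    by_cases hb : v = b
    · simp [Rseq, hb]
    · by_cases hr : v = r
      · rw [Rseq, Rseq]
        simp only [if_neg hb, if_pos hr, le_refl]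
      · rw [Rseq_succ_aux]
        simp only [if_neg hb, if_neg hr]
        have h3 : Rseq E b r 0 v = 1 := by simp [Rseq, hb]
        rw [h3]
        linarith
  | succ t ih =>
    have h1 := fplus_mono_aux E _ _ ih v
    have h2 := fminus_mono_aux E _ _ ih v
    rw [Rseq_succ_aux E b r (t + 1), Rseq_succ_aux E b r t]
    by_cases hb : v = b
    · simp only [if_pos hb, le_refl]
    · by_cases hr : v = r
      · simp only [if_neg hb, if_pos hr, le_refl]
      · simp only [if_neg hb, if_neg hr]
        linarith
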